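/- arXiv:1303.2299 — 2 statements merged into one kernel-verified Lean document; each statement's English description precedes it below -/
import Mathlib

section
/- Let T be a ℤ₊^k-action on a compact metric space X with generators {T_i : 1 ≤ i ≤ k}, and for an integer m > 1 let T^m denote the ℤ₊^k-action with generators {T_i^m : 1 ≤ i ≤ k}. Then h(T^m) ≤ m·h(T). -/
/-!
Every orbit of `T^m` is obtained from an orbit of `T` by keeping only the times divisible by `m`:
between two consecutive entries `y q` and `(T i)^[m] (y q)` one inserts the intermediate points
`(T i)^[r] (y q)`, `0 < r < m` (`orbitSpace_iterate_subset`). The sampling map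
`x ↦ (n ↦ x (m * n))` is uniformly continuous and semiconjugates `σ^m` to `σ`, so
`h(T^m) ≤ h(σ^m, X_T)`. Finally `h(σ^m, X_T) ≤ m * h(σ, X_T)`, since a cover adapted to `m * n`
steps of `σ` is also adapted to `n` steps of `σ^m` (`coverEntropy_iterate_le`).
-/

/-- The shift map on one-sided sequences. -/
def seqShift {X : Type*} : (ℕ → X) → (ℕ → X) := fun x n => x (n + 1)

/-- The orbit space `X_T` of the `ℤ₊^k`-action generated by `T 0, …, T (k-1)`. -/
def orbitSpace {X : Type*} {k : ℕ} (T : Fin k → X → X) : Set (ℕ → X) :=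
  {x | ∀ n : ℕ, ∃ i : Fin k, x (n + 1) = T i (x n)}

/-- Friedland's entropy of the `ℤ₊^k`-action generated by `T`. -/
noncomputable def friedlandEntropy {X : Type*} [UniformSpace X] {k : ℕ}
    (T : Fin k → X → X) : EReal :=
  Dynamics.coverEntropy seqShift (orbitSpace T)

open Dynamics Function

lemma coverMincard_iterate_le {Y : Type*} (S : Y → Y) (F : Set Y) (U : SetRel Y Y) {m : ℕ}
    (hm : 0 < m) (n : ℕ) : coverMincard S^[m] F U n ≤ coverMincard S F U (m * n) := by
  refine le_iInf₂ fun s hs => IsDynCoverOf.coverMincard_le_card ?_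
  refine hs.mono_entourage ?_
  rintro ⟨x, y⟩ hxy
  rw [mem_dynEntourage] at hxy ⊢
  intro j hj
  rw [← iterate_mul]
  exact hxy _ (Nat.mul_lt_mul_of_pos_left hj hm)

/-- No continuity of `S` is needed for this half of the formula for the entropy of an iterate. -/
lemma coverEntropy_iterate_le {Y : Type*} [UniformSpace Y] (S : Y → Y) (F : Set Y) {m : ℕ}
    (hm : 0 < m) : coverEntropy S^[m] F ≤ (m : EReal) * coverEntropy S F := by
  refine iSup₂_le fun U hU => ?_
  have hmono : Monotone fun n ↦ (coverMincard S F U n).toENNReal :=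
    fun _ _ h ↦ ENat.toENNReal_mono (coverMincard_monotone_time S F U h)
  calc coverEntropyEntourage S^[m] F U
      ≤ ExpGrowth.expGrowthSup fun n ↦ (coverMincard S F U (m * n)).toENNReal :=
        ExpGrowth.expGrowthSup_monotone fun n ↦
          ENat.toENNReal_mono (coverMincard_iterate_le S F U hm n)
    _ = m * coverEntropyEntourage S F U := hmono.expGrowthSup_comp_mul hm.ne'
    _ ≤ m * coverEntropy S F :=
        mul_le_mul_of_nonneg_left (coverEntropyEntourage_le_coverEntropy S F hU)
          (Nat.cast_nonneg' m)

lemma seqShift_iterate {X : Type*} (m : ℕ) (x : ℕ → X) (n : ℕ) :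
    seqShift^[m] x n = x (n + m) := by
  induction m generalizing x with
  | zero => rfl
  | succ m ih => rw [iterate_succ_apply, ih]; rfl

/-- Interpolation: every orbit of the action `T^m` is the sampling at multiples of `m` of an orbit
of `T`. -/
lemma orbitSpace_iterate_subset {X : Type*} {k : ℕ} (T : Fin k → X → X) {m : ℕ} (hm : 0 < m) :
    orbitSpace (fun i => (T i)^[m]) ⊆ (fun (x : ℕ → X) n => x (m * n)) '' orbitSpace T := by
  intro y hy
  choose i hi using hy
  refine ⟨fun n => (T (i (n / m)))^[n % m] (y (n / m)), fun n => ⟨i (n / m), ?_⟩, ?_⟩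
  · dsimp only
    rw [← iterate_succ_apply' (T (i (n / m)))]
    have hlt := Nat.mod_lt n hm
    have hn := Nat.div_add_mod n m
    -- Either `n + 1` stays in the same block of length `m`, or it starts the next block.
    rcases (Nat.succ_le_of_lt hlt).lt_or_eq with h | h
    · have h1 : (n + 1) / m = n / m ∧ (n + 1) % m = n % m + 1 :=
        (Nat.div_mod_unique hm).2 ⟨by omega, h⟩
      rw [h1.1, h1.2]
    · have h1 : (n + 1) / m = n / m + 1 ∧ (n + 1) % m = 0 :=
        (Nat.div_mod_unique hm).2 ⟨by rw [Nat.mul_add]; omega, hm⟩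
      rw [h1.1, h1.2, h]
      exact hi _
  · funext n
    simp [Nat.mul_div_cancel_left n hm]

/-- for `m > 1`, the `ℤ₊^k`-action `T^m` generated by the `m`-th iterates
of the generators of `T` satisfies `h(T^m) ≤ m · h(T)`. -/
theorem friedlandEntropy_pow_le {X : Type*} [MetricSpace X] [CompactSpace X] {k : ℕ}
    (T : Fin k → X → X) (hT : ∀ i, Continuous (T i)) (m : ℕ) (hm : 1 < m) :
    friedlandEntropy (fun i => (T i)^[m]) ≤ (m : EReal) * friedlandEntropy T := by
  have hm0 : 0 < m := by omega
  have hsemi : Semiconj (fun (x : ℕ → X) n => x (m * n)) seqShift^[m] seqShift := by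
    intro x
    funext n
    simp [seqShift_iterate, seqShift, Nat.mul_add]
  have huc : UniformContinuous (fun (x : ℕ → X) n => x (m * n)) :=
    uniformContinuous_pi.2 fun n => Pi.uniformContinuous_proj _ (m * n)
  exact (coverEntropy_monotone _ (orbitSpace_iterate_subset T hm0)).trans <|
    (coverEntropy_image_le_of_uniformContinuous hsemi huc _).trans <|
    coverEntropy_iterate_le _ _ hm0
end

section
/- Let T₁,…,T_k be continuous self-maps of a compact metric space X with finite ball dimension D(X), each T_i Lipschitz with Lipschitz constant L(T_i), and set L = max_{1≤i≤k} max{1, L(T_i)}. For every ω = (i_n)_{n≥0} ∈ Σ_k, the Bowen topological entropy of the skew product σ̃ on the fiber Y_ω = {ω} × X satisfies h(σ̃, Y_ω) ≤ D(X)·log L. -/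
/-!
On a fixed fiber the first coordinates of two orbits agree at all times, so orbits separate only
in the `X`-coordinate, and by a factor of at most `Λ ^ j` after `j` steps as soon as every `T i` is
`Λ`-Lipschitz (`exists_iterate_skewProd`). Hence a cover of `X` by balls of radius `δ * Λ⁻¹ ^ n`
gives an `n`-step dynamical cover of the fiber at scale `δ` (`coverMincard_fiber_le`). For `Λ > 1`
these radii tend to `0`, so for `D' > D(X)` the cover has at most `exp (D' * |log (δ * Λ⁻¹ ^ n)|)`
elements for large `n`, and `log (δ * Λ⁻¹ ^ n) = log δ - n * log Λ` yields exponential growth rate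
at most `D' * log Λ` (`coverEntropyEntourage_fiber_le`). Letting `Λ` decrease to `L` and `D'` to
`D(X)` gives the bound. Working with `Λ > L` instead of `L` avoids a separate treatment of `L = 1`,
where the radii would not shrink.
-/

open Filter

/-- The discrete uniformity on `Fin k` (inducing the discrete topology). -/
instance (k : ℕ) : UniformSpace (Fin k) := ⊥

/-- The skew product `σ̃` on `Σ_k × X` over the full shift on `Σ_k = {1,…,k}^{ℤ₊}`,
whose fiber maps are the generators `T i`. -/
def skewProd {X : Type*} {k : ℕ} (T : Fin k → X → X) :
    (ℕ → Fin k) × X → (ℕ → Fin k) × X :=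
  fun p => (seqShift p.1, T (p.1 0) p.2)

/-- `b(ε)`: the minimal number of `ε`-balls needed to cover `X`. -/
noncomputable def ballCoverNum (X : Type*) [MetricSpace X] (ε : ℝ) : ℕ :=
  sInf {m : ℕ | ∃ s : Finset X, s.card = m ∧ (⋃ x ∈ s, Metric.ball x ε) = Set.univ}

/-- The ball dimension `D(X) = limsup_{ε→0⁺} log b(ε) / |log ε| ∈ ℝ ∪ {∞}`. -/
noncomputable def ballDim (X : Type*) [MetricSpace X] : EReal :=
  limsup (fun ε : ℝ => ((Real.log (ballCoverNum X ε) / |Real.log ε| : ℝ) : EReal))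
    (nhdsWithin 0 (Set.Ioi 0))

open Topology

/-- The first coordinate of an orbit point of the skew product does not depend on the point of the
fiber, and the second coordinate is `Λ ^ j`-Lipschitz in it. -/
lemma exists_iterate_skewProd {X : Type*} [MetricSpace X] {k : ℕ} (T : Fin k → X → X) {Λ : ℝ}
    (hΛ : 0 ≤ Λ) (hT : ∀ i x y, dist (T i x) (T i y) ≤ Λ * dist x y) (j : ℕ) (ω : ℕ → Fin k)
    (x y : X) :
    ∃ (η : ℕ → Fin k) (x' y' : X), (skewProd T)^[j] (ω, x) = (η, x') ∧
      (skewProd T)^[j] (ω, y) = (η, y') ∧ dist x' y' ≤ Λ ^ j * dist x y := by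
  induction j generalizing ω x y with
  | zero => exact ⟨ω, x, y, rfl, rfl, by simp⟩
  | succ j ih =>
    obtain ⟨η, x', y', hx, hy, h⟩ := ih (seqShift ω) (T (ω 0) x) (T (ω 0) y)
    refine ⟨η, x', y', hx, hy, h.trans ?_⟩
    calc Λ ^ j * dist (T (ω 0) x) (T (ω 0) y) ≤ Λ ^ j * (Λ * dist x y) := by
          gcongr
          exact hT _ _ _
      _ = Λ ^ (j + 1) * dist x y := by ring

/-- Compactness makes `ballCoverNum` an attained minimum rather than the junk value `sInf ∅ = 0`. -/
lemma exists_ballCover (X : Type*) [MetricSpace X] [CompactSpace X] {ε : ℝ} (hε : 0 < ε) :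
    ∃ s : Finset X, s.card = ballCoverNum X ε ∧ (⋃ x ∈ s, Metric.ball x ε) = Set.univ := by
  have hne : {m : ℕ | ∃ s : Finset X, s.card = m ∧
      (⋃ x ∈ s, Metric.ball x ε) = Set.univ}.Nonempty := by
    obtain ⟨t, -, ht⟩ := (isCompact_univ (X := X)).elim_nhds_subcover
      (fun x => Metric.ball x ε) (fun x _ => Metric.ball_mem_nhds x hε)
    exact ⟨t.card, t, rfl, Set.univ_subset_iff.mp ht⟩
  exact Nat.sInf_mem hne

lemma ballCoverNum_pos (X : Type*) [MetricSpace X] [CompactSpace X] [Nonempty X] {ε : ℝ}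
    (hε : 0 < ε) : 0 < ballCoverNum X ε := by
  obtain ⟨s, hs, hcov⟩ := exists_ballCover X hε
  rw [← hs, Finset.card_pos]
  by_contra h
  rw [Finset.not_nonempty_iff_eq_empty] at h
  subst h
  simp at hcov
  exact Set.empty_ne_univ hcov

lemma coverMincard_fiber_le {X : Type*} [MetricSpace X] [CompactSpace X] {k : ℕ}
    (T : Fin k → X → X) {Λ : ℝ} (hΛ : 1 < Λ)
    (hT : ∀ i x y, dist (T i x) (T i y) ≤ Λ * dist x y) (ω : ℕ → Fin k)
    {U : SetRel ((ℕ → Fin k) × X) ((ℕ → Fin k) × X)} {δ : ℝ} (hδ : 0 < δ)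
    (hU : ∀ (η : ℕ → Fin k) (x y : X), dist x y < δ → ((η, x), (η, y)) ∈ U) (n : ℕ) :
    Dynamics.coverMincard (skewProd T) ({ω} ×ˢ (Set.univ : Set X)) U n ≤
      (ballCoverNum X (δ * Λ⁻¹ ^ n) : ℕ∞) := by
  classical
  have hΛ0 : 0 < Λ := by linarith
  obtain ⟨s, hs, hcov⟩ := exists_ballCover X (ε := δ * Λ⁻¹ ^ n) (by positivity)
  have hdyn : Dynamics.IsDynCoverOf (skewProd T) ({ω} ×ˢ (Set.univ : Set X)) U n
      ((s.image fun x => (ω, x) : Finset ((ℕ → Fin k) × X)) : Set ((ℕ → Fin k) × X)) := by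
    rintro ⟨η, x⟩ ⟨hη, -⟩
    obtain rfl : η = ω := hη
    have hx : x ∈ ⋃ y ∈ s, Metric.ball y (δ * Λ⁻¹ ^ n) := hcov ▸ Set.mem_univ x
    simp only [Set.mem_iUnion, Metric.mem_ball, exists_prop] at hx
    obtain ⟨y, hy, hxy⟩ := hx
    refine ⟨(η, y), by simpa using hy, ?_⟩
    refine Dynamics.mem_dynEntourage.2 fun j hj => ?_
    obtain ⟨ζ, x', y', hx', hy', h⟩ := exists_iterate_skewProd T hΛ0.le hT j η x y
    rw [hx', hy']
    refine hU _ _ _ (h.trans_lt ?_)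
    calc Λ ^ j * dist x y ≤ Λ ^ n * dist x y := by
          gcongr
          exact hΛ.le
      _ < Λ ^ n * (δ * Λ⁻¹ ^ n) := by gcongr
      _ = δ := by
          rw [inv_pow]
          field_simp
  refine hdyn.coverMincard_le_card.trans ?_
  rw [← hs]
  exact_mod_cast Finset.card_image_le

lemma coverEntropyEntourage_fiber_le {X : Type*} [MetricSpace X] [CompactSpace X] [Nonempty X]
    {k : ℕ} (T : Fin k → X → X) {Λ : ℝ} (hΛ : 1 < Λ)
    (hT : ∀ i x y, dist (T i x) (T i y) ≤ Λ * dist x y) (ω : ℕ → Fin k)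
    {U : SetRel ((ℕ → Fin k) × X) ((ℕ → Fin k) × X)} (hU : U ∈ uniformity ((ℕ → Fin k) × X))
    {D' : ℝ} (hD' : ballDim X < D') :
    Dynamics.coverEntropyEntourage (skewProd T) ({ω} ×ˢ (Set.univ : Set X)) U ≤
      ((D' * Real.log Λ : ℝ) : EReal) := by
  have hΛ0 : 0 < Λ := by linarith
  obtain ⟨δ, hδ, hδU⟩ : ∃ δ > 0, ∀ (η : ℕ → Fin k) (x y : X), dist x y < δ →
      ((η, x), (η, y)) ∈ U := by
    obtain ⟨V, hV, W, hW, hVW⟩ := entourageProd_subset hU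
    obtain ⟨δ, hδ, hW⟩ := Metric.mem_uniformity_dist.1 hW
    exact ⟨δ, hδ, fun η x y h => hVW ⟨refl_mem_uniformity hV, hW h⟩⟩
  have hpow : Tendsto (fun n : ℕ => Λ⁻¹ ^ n) atTop (𝓝 0) :=
    tendsto_pow_atTop_nhds_zero_of_lt_one (by positivity) (inv_lt_one_of_one_lt₀ hΛ)
  have hε : Tendsto (fun n : ℕ => δ * Λ⁻¹ ^ n) atTop (𝓝[>] 0) := by
    refine tendsto_nhdsWithin_iff.2 ⟨by simpa using hpow.const_mul δ, ?_⟩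
    exact Eventually.of_forall fun n => Set.mem_Ioi.2 (by positivity)
  have hdim : ∀ᶠ n : ℕ in atTop,
      Real.log (ballCoverNum X (δ * Λ⁻¹ ^ n)) / |Real.log (δ * Λ⁻¹ ^ n)| < D' := by
    filter_upwards [hε.eventually (eventually_lt_of_limsup_lt hD')] with n hn
    exact_mod_cast hn
  have hsmall : ∀ᶠ n : ℕ in atTop, δ * Λ⁻¹ ^ n < 1 :=
    (hε.mono_right nhdsWithin_le_nhds).eventually (gt_mem_nhds one_pos)
  have hlim : Tendsto (fun n : ℕ => ((D' * (Real.log Λ - Real.log δ / n) : ℝ) : EReal)) atTop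
      (𝓝 ((D' * Real.log Λ : ℝ) : EReal)) := by
    refine (continuous_coe_real_ereal.tendsto _).comp ?_
    simpa using (tendsto_const_nhds.sub
      (tendsto_const_div_atTop_nhds_zero_nat (Real.log δ))).const_mul D'
  rw [Dynamics.coverEntropyEntourage, ExpGrowth.expGrowthSup, ← hlim.limsup_eq]
  refine limsup_le_limsup ?_
  filter_upwards [hdim, hsmall, eventually_gt_atTop 0] with n hn hn1 hn0
  have hεn : 0 < δ * Λ⁻¹ ^ n := by positivity
  have hbpos := ballCoverNum_pos X hεn
  have hlogε : Real.log (δ * Λ⁻¹ ^ n) = Real.log δ - n * Real.log Λ := by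
    rw [Real.log_mul hδ.ne' (by positivity), Real.log_pow, Real.log_inv]
    ring
  have hneg := Real.log_neg hεn hn1
  have hb : Real.log (ballCoverNum X (δ * Λ⁻¹ ^ n)) ≤ D' * (n * Real.log Λ - Real.log δ) := by
    rw [abs_of_neg hneg, div_lt_iff₀ (by linarith), hlogε] at hn
    linarith
  have hn0' : (0 : ℝ) < n := by exact_mod_cast hn0
  have hcard : ((Dynamics.coverMincard (skewProd T) ({ω} ×ˢ (Set.univ : Set X)) U n : ℕ∞) :
      ENNReal) ≤ ENNReal.ofReal (ballCoverNum X (δ * Λ⁻¹ ^ n)) := by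
    rw [ENNReal.ofReal_natCast, ← ENat.toENNReal_coe]
    exact ENat.toENNReal_mono (coverMincard_fiber_le T hΛ hT ω hδ hδU n)
  have hlog : ENNReal.log (ENNReal.ofReal (ballCoverNum X (δ * Λ⁻¹ ^ n))) =
      (Real.log (ballCoverNum X (δ * Λ⁻¹ ^ n)) : EReal) :=
    ENNReal.log_ofReal_of_pos (by exact_mod_cast hbpos)
  calc ENNReal.log _ / (n : EReal)
      ≤ (Real.log (ballCoverNum X (δ * Λ⁻¹ ^ n)) : EReal) / (n : EReal) := by
        rw [← hlog]
        exact EReal.monotone_div_right_of_nonneg n.cast_nonneg' (ENNReal.log_monotone hcard)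
    _ = ((Real.log (ballCoverNum X (δ * Λ⁻¹ ^ n)) / n : ℝ) : EReal) := by
        rw [EReal.coe_div]
        rfl
    _ ≤ _ := by
        rw [EReal.coe_le_coe_iff, div_le_iff₀ hn0']
        refine hb.trans_eq ?_
        field_simp

lemma ballDim_nonneg (X : Type*) [MetricSpace X] : 0 ≤ ballDim X := by
  refine le_limsup_of_frequently_le (Frequently.of_forall fun ε => ?_)
  exact_mod_cast div_nonneg (Real.log_natCast_nonneg _) (abs_nonneg _)

/-- if `X` has finite ball dimension and each `T i` is Lipschitz with
constant `L i`, with `L = maxᵢ max{1, L i}`, then the Bowen entropy of the skew product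
`σ̃` on every fiber `Y_ω = {ω} × X` is at most `D(X) · log L`. -/
theorem coverEntropy_skewProd_fiber_le {X : Type*} [MetricSpace X] [CompactSpace X] {k : ℕ}
    (hk : 0 < k) (T : Fin k → X → X) (L : Fin k → NNReal) (hL : ∀ i, LipschitzWith (L i) (T i))
    (hD : ballDim X ≠ ⊤) (ω : ℕ → Fin k) :
    Dynamics.coverEntropy (skewProd T) ({ω} ×ˢ (Set.univ : Set X)) ≤
      (((ballDim X).toReal * Real.log (⨆ i : Fin k, max 1 (L i : ℝ)) : ℝ) : EReal) := by
  rcases isEmpty_or_nonempty X with hX | hX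
  · have hempty : ({ω} ×ˢ (Set.univ : Set X)) = ∅ := Set.eq_empty_of_isEmpty _
    rw [hempty, Dynamics.coverEntropy_empty]
    exact bot_le
  have hle : ∀ i, max 1 (L i : ℝ) ≤ ⨆ i : Fin k, max 1 (L i : ℝ) :=
    fun i => le_ciSup (Set.finite_range fun i : Fin k => max 1 (L i : ℝ)).bddAbove i
  set M : ℝ := ⨆ i : Fin k, max 1 (L i : ℝ) with hM
  have hM1 : 1 ≤ M := (le_max_left _ _).trans (hle ⟨0, hk⟩)
  have hDcoe : ((ballDim X).toReal : EReal) = ballDim X :=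
    EReal.coe_toReal hD (ne_bot_of_le_ne_bot (by simp) (ballDim_nonneg X))
  refine iSup₂_le fun U hU => ?_
  have hlim : Tendsto (fun t : ℝ => ((((ballDim X).toReal + t) * Real.log (M + t) : ℝ) : EReal))
      (𝓝[>] 0) (𝓝 (((ballDim X).toReal * Real.log M : ℝ) : EReal)) := by
    refine (continuous_coe_real_ereal.tendsto _).comp ?_
    have hc : ContinuousAt (fun t : ℝ => ((ballDim X).toReal + t) * Real.log (M + t)) 0 := by
      have h0 : M + 0 ≠ 0 := by linarith
      fun_prop (disch := assumption)
    simpa using hc.tendsto.mono_left nhdsWithin_le_nhds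
  refine ge_of_tendsto hlim ?_
  filter_upwards [self_mem_nhdsWithin] with t ht
  have ht : 0 < t := ht
  refine coverEntropyEntourage_fiber_le T (by linarith) (fun i x y => ?_) ω hU ?_
  · refine ((hL i).dist_le_mul x y).trans ?_
    gcongr
    linarith [hle i, le_max_right 1 (L i : ℝ)]
  · rw [← hDcoe, EReal.coe_lt_coe_iff]
    simpa using ht
end
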